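/- arXiv:1602.01275 — 4 statements merged into one kernel-verified Lean document; each statement's English description precedes it below -/
import Mathlib

section
/- Let (X,d) be a metric space and let (S_t)_{t≥0} be a semigroup of maps S_t : X → X (i.e. S_0 = id and S_{t+s} = S_t ∘ S_s for all t,s ≥ 0) satisfying d(S_t x₁, S_t x₂) ≤ C e^{K t} d(x₁,x₂) for all t ≥ 0 and all x₁,x₂ ∈ X, for some constants C > 0 and K > 0. Assume U₁, U₂, U₃ are nonempty subsets of X such that dist_X(S_t U₁, U₂) ≤ C₁ e^{−α₁ t} and dist_X(S_t U₂, U₃) ≤ C₂ e^{−α₂ t} for all t ≥ 0, where C₁, C₂ ≥ 0 and α₁, α₂ > 0. Then for all t ≥ 0, dist_X(S_t U₁, U₃) ≤ C′ e^{−α′ t}, where C′ = C·C₁ + C₂ and α′ = α₁α₂/(K + α₁ + α₂). -/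
open Metric Real

/-!
Given `t = s + r`, first flow for time `r` to come within `C₁ e^{-α₁ r}` of `U₂`, then for time `s`
to come within `C₂ e^{-α₂ s}` of `U₃`; the second stage inflates the error of the first by at most
`C e^{K s}`, giving
`dist (S_t U₁, U₃) ≤ C C₁ e^{K s - α₁ r} + C₂ e^{-α₂ s}`.
The two exponents agree exactly when `α₁ r - K s = α₂ s`, i.e. `s = α₁ t / (K + α₁ + α₂)`,
and their common value is then `-α₁ α₂ t / (K + α₁ + α₂)`.
-/

/-- The set `V` attracts `U` exponentially under the family of maps `S`, with constant `c` and
rate `α`: `dist_X (S_t U, V) ≤ c e^{-α t}` for all `t ≥ 0`. The semidistance is expressed pointwise;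
`V` is required to be nonempty because `infDist x ∅ = 0`. -/
structure ExpAttractedTo {X : Type*} [PseudoMetricSpace X] (S : ℝ → X → X) (U V : Set X)
    (c α : ℝ) : Prop where
  nonempty : V.Nonempty
  infDist_le : ∀ t : ℝ, 0 ≤ t → ∀ x ∈ U, infDist (S t x) V ≤ c * exp (-α * t)

theorem infDist_apply_le_add_mul_infDist {X Y : Type*} [PseudoMetricSpace X] [PseudoMetricSpace Y]
    {f : X → Y} {A : Set X} {B : Set Y} {x : X} {L δ : ℝ} (hL : 0 ≤ L) (hA : A.Nonempty)
    (hf : ∀ a ∈ A, dist (f x) (f a) ≤ L * dist x a) (hB : ∀ a ∈ A, infDist (f a) B ≤ δ) :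
    infDist (f x) B ≤ δ + L * infDist x A := by
  have : Nonempty A := hA.to_subtype
  rw [← sub_le_iff_le_add', infDist_eq_iInf (s := A), Real.mul_iInf_of_nonneg hL]
  refine le_ciInf fun ⟨a, ha⟩ ↦ sub_le_iff_le_add'.2 ?_
  calc infDist (f x) B ≤ infDist (f a) B + dist (f x) (f a) := infDist_le_infDist_add_dist
    _ ≤ δ + L * dist x a := add_le_add (hB a ha) (hf a ha)

theorem exists_balanced_time_split {K α₁ α₂ t : ℝ} (hα₁ : 0 ≤ α₁) (hKα₂ : 0 ≤ K + α₂)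
    (hsum : 0 < K + α₁ + α₂) (ht : 0 ≤ t) :
    ∃ s r : ℝ, 0 ≤ s ∧ 0 ≤ r ∧ s + r = t ∧
      -α₂ * s = -(α₁ * α₂ / (K + α₁ + α₂)) * t ∧
      K * s - α₁ * r = -(α₁ * α₂ / (K + α₁ + α₂)) * t := by
  refine ⟨α₁ / (K + α₁ + α₂) * t, (K + α₂) / (K + α₁ + α₂) * t, by positivity, by positivity,
    ?_, ?_, ?_⟩ <;> field_simp <;> ring

section Semigroup

variable {X : Type*} [PseudoMetricSpace X] {S : ℝ → X → X} {C K : ℝ} {U₁ U₂ U₃ : Set X}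
  {C₁ C₂ α₁ α₂ : ℝ}

theorem ExpAttractedTo.infDist_add_le
    (hSsemi : ∀ t s : ℝ, 0 ≤ t → 0 ≤ s → S (t + s) = S t ∘ S s) (hC : 0 ≤ C)
    (hLip : ∀ t : ℝ, 0 ≤ t → ∀ x₁ x₂ : X, dist (S t x₁) (S t x₂) ≤ C * exp (K * t) * dist x₁ x₂)
    (h12 : ExpAttractedTo S U₁ U₂ C₁ α₁) (h23 : ExpAttractedTo S U₂ U₃ C₂ α₂)
    {s r : ℝ} (hs : 0 ≤ s) (hr : 0 ≤ r) {x : X} (hx : x ∈ U₁) :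
    infDist (S (s + r) x) U₃ ≤ C * C₁ * exp (K * s - α₁ * r) + C₂ * exp (-α₂ * s) := by
  have hL : 0 ≤ C * exp (K * s) := by positivity
  rw [hSsemi s r hs hr, Function.comp_apply]
  calc infDist (S s (S r x)) U₃
      ≤ C₂ * exp (-α₂ * s) + C * exp (K * s) * infDist (S r x) U₂ :=
        infDist_apply_le_add_mul_infDist hL h12.nonempty (fun a _ ↦ hLip s hs _ a)
          (h23.infDist_le s hs)
    _ ≤ C₂ * exp (-α₂ * s) + C * exp (K * s) * (C₁ * exp (-α₁ * r)) := by
        gcongr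
        exact h12.infDist_le r hr x hx
    _ = C * C₁ * exp (K * s - α₁ * r) + C₂ * exp (-α₂ * s) := by
        rw [sub_eq_add_neg, ← neg_mul, exp_add]
        ring

theorem transitivity_of_exponential_attraction_general
    (hSsemi : ∀ t s : ℝ, 0 ≤ t → 0 ≤ s → S (t + s) = S t ∘ S s) (hC : 0 ≤ C)
    (hLip : ∀ t : ℝ, 0 ≤ t → ∀ x₁ x₂ : X, dist (S t x₁) (S t x₂) ≤ C * exp (K * t) * dist x₁ x₂)
    (hα₁ : 0 ≤ α₁) (hKα₂ : 0 ≤ K + α₂) (hsum : 0 < K + α₁ + α₂)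
    (h12 : ExpAttractedTo S U₁ U₂ C₁ α₁) (h23 : ExpAttractedTo S U₂ U₃ C₂ α₂) :
    ExpAttractedTo S U₁ U₃ (C * C₁ + C₂) (α₁ * α₂ / (K + α₁ + α₂)) where
  nonempty := h23.nonempty
  infDist_le t ht x hx := by
    obtain ⟨s, r, hs, hr, rfl, hα₂s, hKs⟩ := exists_balanced_time_split hα₁ hKα₂ hsum ht
    have hsplit := h12.infDist_add_le hSsemi hC hLip h23 hs hr hx
    rwa [hα₂s, hKs, ← add_mul] at hsplit

end Semigroup

/-- **Transitivity of exponential attraction.**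
Let `(X,d)` be a metric space and `(S_t)` a semigroup on `X` satisfying
`d(S_t x₁, S_t x₂) ≤ C e^{Kt} d(x₁,x₂)`.  If `dist(S_t U₁, U₂) ≤ C₁ e^{-α₁ t}` and
`dist(S_t U₂, U₃) ≤ C₂ e^{-α₂ t}`, then `dist(S_t U₁, U₃) ≤ (C C₁ + C₂) e^{-α' t}` with
`α' = α₁ α₂ / (K + α₁ + α₂)`.  The one-sided Hausdorff semidistance
`dist_X(A,B) = sup_{a ∈ A} inf_{b ∈ B} d(a,b)` is expressed pointwise:
`dist_X(A,B) ≤ r ↔ ∀ a ∈ A, infDist a B ≤ r` (for nonempty sets). -/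
theorem transitivity_of_exponential_attraction
    {X : Type*} [MetricSpace X]
    (S : ℝ → X → X)
    (hS0 : S 0 = id)
    (hSsemi : ∀ t s : ℝ, 0 ≤ t → 0 ≤ s → S (t + s) = S t ∘ S s)
    (C K : ℝ) (hC : 0 < C) (hK : 0 < K)
    (hLip : ∀ t : ℝ, 0 ≤ t → ∀ x₁ x₂ : X,
      dist (S t x₁) (S t x₂) ≤ C * Real.exp (K * t) * dist x₁ x₂)
    (U₁ U₂ U₃ : Set X) (hU₁ : U₁.Nonempty) (hU₂ : U₂.Nonempty) (hU₃ : U₃.Nonempty)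
    (C₁ C₂ : ℝ) (hC₁ : 0 ≤ C₁) (hC₂ : 0 ≤ C₂)
    (α₁ α₂ : ℝ) (hα₁ : 0 < α₁) (hα₂ : 0 < α₂)
    (h12 : ∀ t : ℝ, 0 ≤ t → ∀ x ∈ U₁, infDist (S t x) U₂ ≤ C₁ * Real.exp (-α₁ * t))
    (h23 : ∀ t : ℝ, 0 ≤ t → ∀ x ∈ U₂, infDist (S t x) U₃ ≤ C₂ * Real.exp (-α₂ * t)) :
    ∀ t : ℝ, 0 ≤ t → ∀ x ∈ U₁,
      infDist (S t x) U₃ ≤ (C * C₁ + C₂) * Real.exp (-(α₁ * α₂ / (K + α₁ + α₂)) * t) :=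
  (transitivity_of_exponential_attraction_general hSsemi hC.le hLip hα₁.le (by positivity)
    (by positivity) ⟨hU₂, h12⟩ ⟨hU₃, h23⟩).infDist_le
end

section
/- Let Λ : [0,∞) → [0,∞) be absolutely continuous, let η > 0, k ≥ 0, m ≥ 0, and let h : [0,∞) → ℝ be measurable and locally integrable with ∫_s^t h(τ) dτ ≤ η(t−s) + m for all t ≥ s ≥ 0. If Λ′(t) + 2η Λ(t) ≤ h(t) Λ(t) + k for almost every t ≥ 0, then for all t ≥ 0, Λ(t) ≤ Λ(0) e^m e^{−η t} + k e^m / η. -/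
open MeasureTheory Real

/-! Multiplying `u' ≤ g u + f` by the integrating factor `exp (∫ τ in s..b, g τ)`, whose derivative
in `s` is `-g s` times itself, and integrating over `[a, b]` gives the variation of constants bound
`u b ≤ exp (∫ τ in a..b, g τ) * u a + ∫ s in a..b, exp (∫ τ in s..b, g τ) * f s`. For
`g = h - 2 * η` the factor is at most `exp m * exp (-(η * (b - s)))`, and
`∫ s in a..b, exp (-(η * (b - s))) ≤ η⁻¹`. -/

section AbsoluteContinuity

variable {X Y : Type*} [PseudoMetricSpace X] [PseudoMetricSpace Y] {a b : ℝ}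

theorem absolutelyContinuousOnInterval_of_dist_le {f : ℝ → X} {g : ℝ → Y} {K : ℝ}
    (hf : AbsolutelyContinuousOnInterval f a b)
    (hfg : ∀ x ∈ Set.uIcc a b, ∀ y ∈ Set.uIcc a b, dist (g x) (g y) ≤ K * dist (f x) (f y)) :
    AbsolutelyContinuousOnInterval g a b := by
  unfold AbsolutelyContinuousOnInterval at hf ⊢
  refine squeeze_zero' (.of_forall fun _ ↦ Finset.sum_nonneg fun _ _ ↦ dist_nonneg) ?_
    (by simpa only [mul_zero] using hf.const_mul K)
  rw [Filter.eventually_inf_principal]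
  filter_upwards with E hE
  rw [Finset.mul_sum]
  exact Finset.sum_le_sum fun i hi ↦ hfg _ (hE.1 i hi).1 _ (hE.1 i hi).2

theorem absolutelyContinuousOnInterval_comp_of_locallyLipschitz {E : Type*}
    [SeminormedAddCommGroup E] {f : ℝ → E} {g : E → Y} (hg : LocallyLipschitz g)
    (hf : AbsolutelyContinuousOnInterval f a b) :
    AbsolutelyContinuousOnInterval (fun t ↦ g (f t)) a b := by
  have image_compact : IsCompact (f '' Set.uIcc a b) :=
    isCompact_uIcc.image_of_continuousOn hf.continuousOn
  obtain ⟨K, hK⟩ := LocallyLipschitzOn.exists_lipschitzOnWith_of_compact image_compact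
    hg.locallyLipschitzOn
  exact absolutelyContinuousOnInterval_of_dist_le hf fun x hx y hy ↦
    hK.dist_le_mul _ (Set.mem_image_of_mem f hx) _ (Set.mem_image_of_mem f hy)

theorem absolutelyContinuousOnInterval_of_eq_add_integral {f f' : ℝ → ℝ} (hab : a ≤ b)
    (hf' : IntegrableOn f' (Set.Icc a b))
    (hf : ∀ t ∈ Set.Icc a b, f t = f a + ∫ τ in a..t, f' τ) :
    AbsolutelyContinuousOnInterval f a b := by
  have hf'_int := (intervalIntegrable_iff_integrableOn_Icc_of_le hab).2 hf'
  refine absolutelyContinuousOnInterval_of_dist_le (K := 1)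
    (hf'_int.absolutelyContinuousOnInterval_intervalIntegral Set.left_mem_uIcc) fun x hx y hy ↦ ?_
  rw [Set.uIcc_of_le hab] at hx hy
  rw [hf x hx, hf y hy, dist_add_left, one_mul]

theorem sub_le_integral_of_ae_deriv_le {f φ : ℝ → ℝ} (hab : a ≤ b)
    (hf : AbsolutelyContinuousOnInterval f a b) (hφ : IntervalIntegrable φ volume a b)
    (hle : ∀ᵐ t, t ∈ Set.Icc a b → deriv f t ≤ φ t) :
    f b - f a ≤ ∫ t in a..b, φ t := by
  rw [← hf.integral_deriv_eq_sub]
  exact intervalIntegral.integral_mono_ae_restrict hab hf.intervalIntegrable_deriv hφ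
    ((ae_restrict_iff' measurableSet_Icc).2 hle)

end AbsoluteContinuity

section IntegratingFactor

variable {g : ℝ → ℝ} {a b : ℝ}

theorem absolutelyContinuousOnInterval_exp_integral (hg : IntervalIntegrable g volume a b) :
    AbsolutelyContinuousOnInterval (fun s ↦ exp (∫ τ in s..b, g τ)) a b := by
  refine absolutelyContinuousOnInterval_comp_of_locallyLipschitz
    contDiff_exp.locallyLipschitz ?_
  simpa only [← intervalIntegral.integral_symm] using
    (hg.absolutelyContinuousOnInterval_intervalIntegral Set.right_mem_uIcc).fun_neg

theorem ae_hasDerivAt_exp_integral (hg : IntervalIntegrable g volume a b) :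
    ∀ᵐ t, t ∈ Set.uIcc a b → HasDerivAt (fun s ↦ exp (∫ τ in s..b, g τ))
      (exp (∫ τ in t..b, g τ) * -g t) t := by
  filter_upwards [hg.ae_hasDerivAt_integral] with t ht htab
  simpa only [← intervalIntegral.integral_symm] using (ht htab b Set.right_mem_uIcc).fun_neg.exp

theorem le_exp_integral_mul_add_integral {u f : ℝ → ℝ} (hab : a ≤ b)
    (hu : AbsolutelyContinuousOnInterval u a b) (hg : IntervalIntegrable g volume a b)
    (hf : IntervalIntegrable f volume a b)
    (hle : ∀ᵐ t, t ∈ Set.Icc a b → deriv u t ≤ g t * u t + f t) :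
    u b ≤ exp (∫ τ in a..b, g τ) * u a + ∫ s in a..b, exp (∫ τ in s..b, g τ) * f s := by
  have factor_ac := absolutelyContinuousOnInterval_exp_integral hg
  have deriv_le : ∀ᵐ t, t ∈ Set.Icc a b →
      deriv (fun s ↦ exp (∫ τ in s..b, g τ) * u s) t ≤ exp (∫ τ in t..b, g τ) * f t := by
    filter_upwards [ae_hasDerivAt_exp_integral hg, hu.ae_differentiableAt, hle]
      with t factor_deriv u_diff u_le ht
    have htu : t ∈ Set.uIcc a b := Set.Icc_subset_uIcc ht
    rw [((factor_deriv htu).fun_mul (u_diff htu).hasDerivAt).deriv]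
    calc exp (∫ τ in t..b, g τ) * -g t * u t + exp (∫ τ in t..b, g τ) * deriv u t
        = exp (∫ τ in t..b, g τ) * (deriv u t - g t * u t) := by ring
      _ ≤ exp (∫ τ in t..b, g τ) * f t := by gcongr; linarith [u_le ht]
  have increment_le := sub_le_integral_of_ae_deriv_le hab (factor_ac.fun_mul hu)
    (hf.continuousOn_mul factor_ac.continuousOn) deriv_le
  rw [intervalIntegral.integral_same, exp_zero, one_mul] at increment_le
  linarith

theorem integral_exp_neg_mul_sub_le {η : ℝ} (hη : 0 < η) (a b : ℝ) :
    ∫ s in a..b, exp (-(η * (b - s))) ≤ η⁻¹ := by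
  have antideriv (s : ℝ) :
      HasDerivAt (fun s ↦ exp (-(η * (b - s))) / η) (exp (-(η * (b - s)))) s := by
    have := ((((hasDerivAt_id' s).const_sub b).const_mul η).fun_neg.exp).div_const η
    convert! this using 1
    field
  rw [intervalIntegral.integral_eq_sub_of_hasDerivAt (fun s _ ↦ antideriv s)
    (Continuous.intervalIntegrable (by fun_prop) a b)]
  simp only [sub_self, mul_zero, neg_zero, exp_zero, one_div]
  exact sub_le_self _ (by positivity)

theorem le_exp_mul_add_of_integral_le {u : ℝ → ℝ} {η k m : ℝ} (hab : a ≤ b) (hη : 0 < η)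
    (hk : 0 ≤ k) (hua : 0 ≤ u a) (hu : AbsolutelyContinuousOnInterval u a b)
    (hg : IntervalIntegrable g volume a b)
    (hint : ∀ s ∈ Set.Icc a b, ∫ τ in s..b, g τ ≤ m - η * (b - s))
    (hle : ∀ᵐ t, t ∈ Set.Icc a b → deriv u t ≤ g t * u t + k) :
    u b ≤ u a * exp m * exp (-η * (b - a)) + k * exp m / η := by
  have factor_le (s : ℝ) (hs : s ∈ Set.Icc a b) :
      exp (∫ τ in s..b, g τ) ≤ exp m * exp (-(η * (b - s))) := by
    rw [← exp_add, exp_le_exp]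
    linarith [hint s hs]
  have factor_continuousOn := (absolutelyContinuousOnInterval_exp_integral hg).continuousOn
  have forcing_le : ∫ s in a..b, exp (∫ τ in s..b, g τ) * k ≤ k * exp m / η :=
    calc ∫ s in a..b, exp (∫ τ in s..b, g τ) * k
        ≤ ∫ s in a..b, exp m * exp (-(η * (b - s))) * k :=
          intervalIntegral.integral_mono_on hab
            (factor_continuousOn.mul continuousOn_const).intervalIntegrable
            (Continuous.intervalIntegrable (by fun_prop) a b) fun s hs ↦ by
              gcongr
              exact factor_le s hs
      _ = exp m * (∫ s in a..b, exp (-(η * (b - s)))) * k := by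
          rw [intervalIntegral.integral_mul_const, intervalIntegral.integral_const_mul]
      _ ≤ exp m * η⁻¹ * k := by
          gcongr
          exact integral_exp_neg_mul_sub_le hη a b
      _ = k * exp m / η := by ring
  calc u b ≤ exp (∫ τ in a..b, g τ) * u a + ∫ s in a..b, exp (∫ τ in s..b, g τ) * k :=
        le_exp_integral_mul_add_integral hab hu hg intervalIntegrable_const hle
    _ ≤ exp m * exp (-(η * (b - a))) * u a + k * exp m / η := by
        gcongr
        exact factor_le a (Set.left_mem_Icc.2 hab)
    _ = u a * exp m * exp (-η * (b - a)) + k * exp m / η := by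
        rw [neg_mul]
        ring

end IntegratingFactor

theorem gronwall_type_inequality_general {Λ Λ' h : ℝ → ℝ} {η k m : ℝ} (hη : 0 < η) (hk : 0 ≤ k)
    (hΛ₀ : 0 ≤ Λ 0)
    (hΛac : ∀ T : ℝ, 0 ≤ T → AbsolutelyContinuousOnInterval Λ 0 T)
    (hderiv : ∀ᵐ t : ℝ, 0 ≤ t → HasDerivAt Λ (Λ' t) t)
    (hloc : ∀ T : ℝ, 0 ≤ T → IntegrableOn h (Set.Icc 0 T))
    (hint : ∀ s t : ℝ, 0 ≤ s → s ≤ t → (∫ τ in s..t, h τ) ≤ η * (t - s) + m)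
    (hdiff : ∀ᵐ t : ℝ, 0 ≤ t → Λ' t + 2 * η * Λ t ≤ h t * Λ t + k) (t : ℝ) (ht : 0 ≤ t) :
    Λ t ≤ Λ 0 * exp m * exp (-η * t) + k * exp m / η := by
  have h_int : IntervalIntegrable h volume 0 t :=
    (intervalIntegrable_iff_integrableOn_Icc_of_le ht).2 (hloc t ht)
  have damped_integral_le (s : ℝ) (hs : s ∈ Set.Icc 0 t) :
      ∫ τ in s..t, (h τ - 2 * η) ≤ m - η * (t - s) := by
    have h_int_s : IntervalIntegrable h volume s t :=
      h_int.mono_set (Set.uIcc_subset_uIcc_right (Set.Icc_subset_uIcc hs))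
    rw [intervalIntegral.integral_sub h_int_s intervalIntegrable_const,
      intervalIntegral.integral_const, smul_eq_mul]
    linarith [hint s t hs.1 hs.2]
  have deriv_le : ∀ᵐ s, s ∈ Set.Icc 0 t → deriv Λ s ≤ (h s - 2 * η) * Λ s + k := by
    filter_upwards [hderiv, hdiff] with s hΛ' hle hs
    rw [(hΛ' hs.1).deriv]
    linarith [hle hs.1]
  simpa only [sub_zero] using le_exp_mul_add_of_integral_le ht hη hk hΛ₀ (hΛac t ht)
    (h_int.sub intervalIntegrable_const) damped_integral_le deriv_le

/-- **A Grönwall-type inequality.**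
Let `Λ : [0,∞) → [0,∞)` be absolutely continuous (encoded here by: `Λ'` is locally
integrable, `Λ` satisfies the fundamental theorem of calculus with density `Λ'`, and
`Λ' ` is the derivative of `Λ` a.e.), let `η > 0`, `k ≥ 0`, `m ≥ 0`, and let
`h` be measurable and locally integrable with `∫_s^t h ≤ η (t-s) + m` for all
`t ≥ s ≥ 0`.  If `Λ'(t) + 2ηΛ(t) ≤ h(t)Λ(t) + k` for a.e. `t ≥ 0`, then
`Λ(t) ≤ Λ(0) e^m e^{-ηt} + k e^m / η` for all `t ≥ 0`. -/
theorem gronwall_type_inequality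
    (Λ Λ' h : ℝ → ℝ)
    (η k m : ℝ) (hη : 0 < η) (hk : 0 ≤ k) (hm : 0 ≤ m)
    (hΛnonneg : ∀ t : ℝ, 0 ≤ t → 0 ≤ Λ t)
    (hΛ'int : ∀ T : ℝ, 0 ≤ T → IntegrableOn Λ' (Set.Icc 0 T))
    (hFTC : ∀ t : ℝ, 0 ≤ t → Λ t = Λ 0 + ∫ τ in (0:ℝ)..t, Λ' τ)
    (hderiv : ∀ᵐ t : ℝ, 0 ≤ t → HasDerivAt Λ (Λ' t) t)
    (hmeas : Measurable h)
    (hloc : ∀ T : ℝ, 0 ≤ T → IntegrableOn h (Set.Icc 0 T))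
    (hint : ∀ s t : ℝ, 0 ≤ s → s ≤ t → (∫ τ in s..t, h τ) ≤ η * (t - s) + m)
    (hdiff : ∀ᵐ t : ℝ, 0 ≤ t → Λ' t + 2 * η * Λ t ≤ h t * Λ t + k) :
    ∀ t : ℝ, 0 ≤ t →
      Λ t ≤ Λ 0 * Real.exp m * Real.exp (-η * t) + k * Real.exp m / η :=
  gronwall_type_inequality_general hη hk (hΛnonneg 0 le_rfl) (fun T hT ↦
    absolutelyContinuousOnInterval_of_eq_add_integral hT (hΛ'int T hT) fun t ht ↦ hFTC t ht.1)
    hderiv hloc hint hdiff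
end

section
/- Let H be a real Hilbert space, ε ∈ (0,1], ρ > 0, and let U : [0,∞) → H satisfy ‖U(t)‖_H ≤ ρ for all t ≥ 0. Let Φ₀ : (0,∞) → H be differentiable with ∫₀^∞ μ_ε(s)‖Φ₀′(s)‖²_H ds < ∞, and for t ≥ 0 define D^t : (0,∞) → H by D^t(s) = U(t−s) for 0 < s ≤ t and D^t(s) = Φ₀′(s−t) for s > t (the s-derivative of the integrated past history Φ^t). Then for all t ≥ 0, ε ∫₀^∞ μ_ε(s) ‖D^t(s)‖²_H ds ≤ ε e^{−δ t} ∫₀^∞ μ_ε(s) ‖Φ₀′(s)‖²_H ds + ρ² ‖μ‖_{L¹((0,∞))}. -/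
open MeasureTheory Real Set ENNReal

/-!
The inequality `μ' + δμ ≤ 0` says that `s ↦ e^{δs} μ(s)` is nonincreasing, so
`μ_ε(s + t) ≤ e^{-δt/ε} μ_ε(s)`. Cut the energy integral of `D^t` at `s = t`: on `(0, t]` the
function `D^t` is bounded by `ρ` and `ε ∫ μ_ε = ∫ μ`; on `(t, ∞)` it is the translate by `t` of
`Φ₀'`, and moving the translation onto the kernel produces the exponential factor, which is at
most `e^{-δt}` because `ε ≤ 1`.
-/

section ExponentialDecay

variable {f : ℝ → ℝ} {S : Set ℝ} {δ : ℝ}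

theorem antitoneOn_exp_mul_of_deriv_add_mul_nonpos (hS : Convex ℝ S) (hf : ContinuousOn f S)
    (hf' : DifferentiableOn ℝ f (interior S))
    (hdecay : ∀ x ∈ interior S, deriv f x + δ * f x ≤ 0) :
    AntitoneOn (fun x ↦ exp (δ * x) * f x) S := by
  have hderiv : ∀ x ∈ interior S, HasDerivAt (fun x ↦ exp (δ * x) * f x)
      (exp (δ * x) * (deriv f x + δ * f x)) x := by
    intro x hx
    have hfx : HasDerivAt f (deriv f x) x :=
      (hf'.differentiableAt (isOpen_interior.mem_nhds hx)).hasDerivAt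
    exact ((((hasDerivAt_id x).const_mul δ).exp).mul hfx).congr_deriv (by simp only [id]; ring)
  refine antitoneOn_of_deriv_nonpos hS (by fun_prop)
    (fun x hx ↦ (hderiv x hx).differentiableAt.differentiableWithinAt) fun x hx ↦ ?_
  rw [(hderiv x hx).deriv]
  exact mul_nonpos_of_nonneg_of_nonpos (exp_pos _).le (hdecay x hx)

theorem le_exp_mul_of_deriv_add_mul_nonpos (hS : Convex ℝ S) (hf : ContinuousOn f S)
    (hf' : DifferentiableOn ℝ f (interior S))
    (hdecay : ∀ x ∈ interior S, deriv f x + δ * f x ≤ 0)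
    {x y : ℝ} (hx : x ∈ S) (hy : y ∈ S) (hxy : x ≤ y) :
    f y ≤ exp (-δ * (y - x)) * f x :=
  calc f y = exp (-δ * y) * (exp (δ * y) * f y) := by
        rw [← mul_assoc, ← exp_add, neg_mul, neg_add_cancel, exp_zero, one_mul]
    _ ≤ exp (-δ * y) * (exp (δ * x) * f x) :=
        mul_le_mul_of_nonneg_left
          (antitoneOn_exp_mul_of_deriv_add_mul_nonpos hS hf hf' hdecay hx hy hxy) (exp_pos _).le
    _ = exp (-δ * (y - x)) * f x := by
        rw [← mul_assoc, ← exp_add]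
        ring_nf

end ExponentialDecay

section HalfLine

theorem setLIntegral_Ioi_comp_add_right (f : ℝ → ℝ≥0∞) (a t : ℝ) :
    ∫⁻ s in Ioi a, f (s + t) = ∫⁻ s in Ioi (a + t), f s := by
  have h := (measurePreserving_add_right (volume : Measure ℝ) t).setLIntegral_comp_preimage_emb
    (measurableEmbedding_addRight t) f (Ioi (a + t))
  rwa [preimage_add_const_Ioi, add_sub_cancel_right] at h

theorem setLIntegral_Ioi_comp_div (f : ℝ → ℝ≥0∞) (a : ℝ) {c : ℝ} (hc : 0 < c) :
    ∫⁻ s in Ioi a, f (s / c) = ENNReal.ofReal c * ∫⁻ s in Ioi (a / c), f s := by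
  have hemb : MeasurableEmbedding fun s : ℝ ↦ s * c⁻¹ :=
    measurableEmbedding_mulRight₀ (inv_ne_zero hc.ne')
  have hpre : (fun s : ℝ ↦ s * c⁻¹) ⁻¹' Ioi (a / c) = Ioi a := by
    ext s
    simp only [mem_preimage, mem_Ioi, ← div_eq_mul_inv, div_lt_div_iff_of_pos_right hc]
  have hmap : Measure.map (fun s : ℝ ↦ s * c⁻¹) volume = ENNReal.ofReal c • volume := by
    rw [Real.map_volume_mul_right (inv_ne_zero hc.ne'), inv_inv, abs_of_pos hc]
  rw [← smul_eq_mul, ← lintegral_smul_measure, ← Measure.restrict_smul, ← hmap,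
    hemb.restrict_map, hemb.lintegral_map, hpre]
  simp only [div_eq_mul_inv]

theorem setLIntegral_Ioi_mul_le_of_translate {k g d : ℝ → ℝ≥0∞} {c C : ℝ≥0∞} {t : ℝ}
    (hc : c ≠ ⊤) (hC : C ≠ ⊤) (ht : 0 ≤ t) (hk : ∀ s, 0 < s → k (s + t) ≤ c * k s)
    (hd_recent : ∀ s ∈ Ioc 0 t, d s ≤ C) (hd_past : ∀ s, t < s → d s ≤ g (s - t)) :
    ∫⁻ s in Ioi 0, k s * d s ≤ c * (∫⁻ s in Ioi 0, k s * g s) + C * ∫⁻ s in Ioi 0, k s := by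
  have recent : ∫⁻ s in Ioc 0 t, k s * d s ≤ C * ∫⁻ s in Ioi 0, k s :=
    calc ∫⁻ s in Ioc 0 t, k s * d s
        ≤ ∫⁻ s in Ioc 0 t, C * k s := setLIntegral_mono' measurableSet_Ioc fun s hs ↦ by
          rw [mul_comm]
          gcongr
          exact hd_recent s hs
      _ ≤ ∫⁻ s in Ioi 0, C * k s := lintegral_mono_set Ioc_subset_Ioi_self
      _ = C * ∫⁻ s in Ioi 0, k s := lintegral_const_mul' _ _ hC
  have past : ∫⁻ s in Ioi t, k s * d s ≤ c * ∫⁻ s in Ioi 0, k s * g s :=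
    calc ∫⁻ s in Ioi t, k s * d s
        = ∫⁻ s in Ioi 0, k (s + t) * d (s + t) := by
          rw [setLIntegral_Ioi_comp_add_right (fun s ↦ k s * d s), zero_add]
      _ ≤ ∫⁻ s in Ioi 0, c * (k s * g s) := setLIntegral_mono' measurableSet_Ioi fun s hs ↦ by
          have hds : d (s + t) ≤ g s := by
            simpa only [add_sub_cancel_right] using hd_past (s + t) (lt_add_of_pos_left t hs)
          rw [← mul_assoc]
          gcongr
          exact hk s hs
      _ = c * ∫⁻ s in Ioi 0, k s * g s := lintegral_const_mul' _ _ hc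
  calc ∫⁻ s in Ioi 0, k s * d s
      = ∫⁻ s in Ioc 0 t ∪ Ioi t, k s * d s := by rw [Ioc_union_Ioi_eq_Ioi ht]
    _ ≤ (∫⁻ s in Ioc 0 t, k s * d s) + ∫⁻ s in Ioi t, k s * d s := lintegral_union_le _ _ _
    _ ≤ _ := by
      rw [add_comm]
      gcongr

end HalfLine

/-- The rescaled memory kernel `μ_ε(s) = ε⁻² μ(s/ε)`. -/
noncomputable def rescaledKernel (μ : ℝ → ℝ) (ε s : ℝ) : ℝ := (ε ^ 2)⁻¹ * μ (s / ε)

section RescaledKernel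

variable {μ : ℝ → ℝ} {ε : ℝ}

theorem rescaledKernel_add_le {δ : ℝ} (hμdiff : DifferentiableOn ℝ μ (Ioi 0))
    (hμdecay : ∀ s : ℝ, 0 < s → deriv μ s + δ * μ s ≤ 0) (hε : 0 < ε)
    {s t : ℝ} (hs : 0 < s) (ht : 0 ≤ t) :
    rescaledKernel μ ε (s + t) ≤ exp (-δ * (t / ε)) * rescaledKernel μ ε s := by
  have hdecay : μ ((s + t) / ε) ≤ exp (-δ * ((s + t) / ε - s / ε)) * μ (s / ε) :=
    le_exp_mul_of_deriv_add_mul_nonpos (convex_Ioi 0) hμdiff.continuousOn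
      (by rwa [interior_Ioi]) (by rwa [interior_Ioi]) (div_pos hs hε) (div_pos (by positivity) hε)
      (by gcongr; exact le_add_of_nonneg_right ht)
  rw [← sub_div, add_sub_cancel_left] at hdecay
  rw [rescaledKernel, rescaledKernel, mul_left_comm]
  gcongr

theorem ofReal_mul_setLIntegral_rescaledKernel (μ : ℝ → ℝ) (hε : 0 < ε) :
    ENNReal.ofReal ε * ∫⁻ s in Ioi 0, ENNReal.ofReal (rescaledKernel μ ε s) =
      ∫⁻ s in Ioi 0, ENNReal.ofReal (μ s) := by
  have hfactor : ∀ s, ENNReal.ofReal (rescaledKernel μ ε s) =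
      ENNReal.ofReal (ε ^ 2)⁻¹ * ENNReal.ofReal (μ (s / ε)) :=
    fun s ↦ ENNReal.ofReal_mul (by positivity)
  have hscalar : ε * ((ε ^ 2)⁻¹ * ε) = 1 := by field_simp
  simp only [hfactor]
  rw [lintegral_const_mul' _ _ ENNReal.ofReal_ne_top,
    setLIntegral_Ioi_comp_div (fun s ↦ ENNReal.ofReal (μ s)) 0 hε, zero_div, ← mul_assoc,
    ← mul_assoc, ← ENNReal.ofReal_mul hε.le, ← ENNReal.ofReal_mul (by positivity), mul_assoc,
    hscalar, ENNReal.ofReal_one, one_mul]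

end RescaledKernel

theorem history_derivative_decay_general
    {H : Type*} [NormedAddCommGroup H] [NormedSpace ℝ H]
    (δ : ℝ) (μ : ℝ → ℝ)
    (hμnonneg : ∀ s : ℝ, 0 < s → 0 ≤ μ s)
    (hμdiff : DifferentiableOn ℝ μ (Ioi 0))
    (hμint : IntegrableOn μ (Ioi 0))
    (hμdecay : ∀ s : ℝ, 0 < s → deriv μ s + δ * μ s ≤ 0)
    (ε : ℝ) (hε : 0 < ε)
    (ρ : ℝ) (U : ℝ → H) (hU : ∀ t : ℝ, 0 ≤ t → ‖U t‖ ≤ ρ)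
    (Φ₀ Φ₀' : ℝ → H)
    (hΦ₀deriv : ∀ s : ℝ, 0 < s → HasDerivAt Φ₀ (Φ₀' s) s)
    (D : ℝ → ℝ → H)
    (hD1 : ∀ t : ℝ, 0 ≤ t → ∀ s : ℝ, 0 < s → s ≤ t → D t s = U (t - s))
    (hD2 : ∀ t : ℝ, 0 ≤ t → ∀ s : ℝ, t < s → D t s = Φ₀' (s - t))
    (t : ℝ) (ht : 0 ≤ t) :
    ENNReal.ofReal ε * (∫⁻ s in Ioi 0, ENNReal.ofReal (rescaledKernel μ ε s * ‖D t s‖ ^ 2)) ≤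
      ENNReal.ofReal (ε * exp (-δ * (t / ε))) *
          (∫⁻ s in Ioi 0, ENNReal.ofReal (rescaledKernel μ ε s * ‖Φ₀' s‖ ^ 2)) +
        ENNReal.ofReal (ρ ^ 2 * ∫ s in Ioi 0, μ s) := by
  have hkernel : ∀ s, 0 < s → ENNReal.ofReal (rescaledKernel μ ε (s + t)) ≤
      ENNReal.ofReal (exp (-δ * (t / ε))) * ENNReal.ofReal (rescaledKernel μ ε s) := by
    intro s hs
    rw [← ENNReal.ofReal_mul (exp_pos _).le]
    exact ENNReal.ofReal_le_ofReal (rescaledKernel_add_le hμdiff hμdecay hε hs ht)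
  have hrecent : ∀ s ∈ Ioc 0 t, ENNReal.ofReal (‖D t s‖ ^ 2) ≤ ENNReal.ofReal (ρ ^ 2) := by
    intro s hs
    rw [hD1 t ht s hs.1 hs.2]
    gcongr
    exact hU _ (sub_nonneg.2 hs.2)
  have hmass : ∫⁻ s in Ioi 0, ENNReal.ofReal (μ s) = ENNReal.ofReal (∫ s in Ioi 0, μ s) :=
    (ofReal_integral_eq_lintegral_ofReal hμint
      (ae_restrict_of_forall_mem measurableSet_Ioi hμnonneg)).symm
  have hsplit := setLIntegral_Ioi_mul_le_of_translate (g := fun s ↦ ENNReal.ofReal (‖Φ₀' s‖ ^ 2))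
    ENNReal.ofReal_ne_top ENNReal.ofReal_ne_top ht hkernel hrecent
    fun s hs ↦ by rw [hD2 t ht s hs]
  simp only [ENNReal.ofReal_mul' (sq_nonneg ‖_‖)]
  grw [hsplit]
  rw [mul_add, ← mul_assoc, ← ENNReal.ofReal_mul hε.le, mul_left_comm (ENNReal.ofReal ε),
    ofReal_mul_setLIntegral_rescaledKernel μ hε, hmass, ← ENNReal.ofReal_mul (sq_nonneg ρ)]

/-- **Decay of the `s`-derivative of the integrated past history.**
With memory kernel `μ` (nonnegative, nonincreasing, `C¹`, integrable on `(0,∞)`,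
satisfying `μ' + δμ ≤ 0`), rescaled kernel `μ_ε(s) = ε⁻² μ(s/ε)`, a trajectory `U`
bounded by `ρ`, and past-history datum `Φ₀` with `∫ μ_ε ‖Φ₀'‖² < ∞`, the function
`D^t(s) = U(t-s)` for `0 < s ≤ t`, `D^t(s) = Φ₀'(s-t)` for `s > t` (the `s`-derivative
of the integrated past history) satisfies
`ε ∫ μ_ε ‖D^t‖² ≤ ε e^{-δt} ∫ μ_ε ‖Φ₀'‖² + ρ² ‖μ‖_{L¹}` for all `t ≥ 0`. -/
theorem history_derivative_decay
    {H : Type*} [NormedAddCommGroup H] [InnerProductSpace ℝ H] [CompleteSpace H]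
    (δ : ℝ) (hδ : 0 < δ)
    (μ : ℝ → ℝ)
    (hμnonneg : ∀ s : ℝ, 0 < s → 0 ≤ μ s)
    (hμanti : ∀ s t : ℝ, 0 < s → s ≤ t → μ t ≤ μ s)
    (hμC1 : ContDiffOn ℝ 1 μ (Ioi 0))
    (hμint : IntegrableOn μ (Ioi 0))
    (hμdecay : ∀ s : ℝ, 0 < s → deriv μ s + δ * μ s ≤ 0)
    (ε : ℝ) (hε : ε ∈ Ioc (0:ℝ) 1)
    (ρ : ℝ) (hρ : 0 < ρ)
    (U : ℝ → H) (hU : ∀ t : ℝ, 0 ≤ t → ‖U t‖ ≤ ρ)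
    (Φ₀ Φ₀' : ℝ → H)
    (hΦ₀deriv : ∀ s : ℝ, 0 < s → HasDerivAt Φ₀ (Φ₀' s) s)
    (hΦ₀'fin : (∫⁻ s in Ioi (0:ℝ), ENNReal.ofReal ((ε^2)⁻¹ * μ (s/ε) * ‖Φ₀' s‖^2)) < ⊤)
    (D : ℝ → ℝ → H)
    (hD1 : ∀ t : ℝ, 0 ≤ t → ∀ s : ℝ, 0 < s → s ≤ t → D t s = U (t - s))
    (hD2 : ∀ t : ℝ, 0 ≤ t → ∀ s : ℝ, t < s → D t s = Φ₀' (s - t)) :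
    ∀ t : ℝ, 0 ≤ t →
      ENNReal.ofReal ε *
          (∫⁻ s in Ioi (0:ℝ), ENNReal.ofReal ((ε^2)⁻¹ * μ (s/ε) * ‖D t s‖^2))
        ≤ ENNReal.ofReal (ε * Real.exp (-δ * t)) *
              (∫⁻ s in Ioi (0:ℝ), ENNReal.ofReal ((ε^2)⁻¹ * μ (s/ε) * ‖Φ₀' s‖^2))
            + ENNReal.ofReal (ρ^2 * ∫ s in Ioi (0:ℝ), μ s) := by
  intro t ht
  refine (history_derivative_decay_general δ μ hμnonneg (hμC1.differentiableOn one_ne_zero) hμint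
    hμdecay ε hε.1 ρ U hU Φ₀ Φ₀' hΦ₀deriv D hD1 hD2 t ht).trans ?_
  have hrate : -δ * (t / ε) ≤ -δ * t :=
    mul_le_mul_of_nonpos_left (le_div_self ht hε.1 hε.2) (neg_nonpos.2 hδ.le)
  unfold rescaledKernel
  gcongr
  exact hε.1.le
end

section
/- Let H be a real Hilbert space, ε ∈ (0,1], ρ > 0, and let U : [0,∞) → H satisfy ‖U(t)‖_H ≤ ρ for all t ≥ 0. Let Φ₀ : (0,∞) → H be measurable with sup_{τ≥1} τ·𝕋_ε(τ; Φ₀) < ∞, and let Φ^t be the integrated past history generated by U and Φ₀. Then there exists a constant C > 0, depending only on μ and δ (and in particular independent of ε, t, ρ, U and Φ₀), such that for all t ≥ 0, sup_{τ≥1} τ·𝕋_ε(τ; Φ^t) ≤ 2(t+2) e^{−δ t} · sup_{τ≥1} τ·𝕋_ε(τ; Φ₀) + C ρ². -/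
open MeasureTheory Real Set ENNReal

/-- The tail function `𝕋_ε(τ; Φ) = ∫_{(0,1/τ) ∪ (τ,∞)} ε μ_ε(s) ‖Φ(s)‖² ds`,
with `μ_ε(s) = ε⁻² μ(s/ε)`. -/
noncomputable def tailFn {H : Type*} [NormedAddCommGroup H]
    (μ : ℝ → ℝ) (ε : ℝ) (Φ : ℝ → H) (τ : ℝ) : ℝ≥0∞ :=
  ∫⁻ s in Ioo (0:ℝ) (1/τ) ∪ Ioi τ,
    ENNReal.ofReal (ε * ((ε^2)⁻¹ * μ (s/ε)) * ‖Φ s‖^2)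

/-- `sup_{τ ≥ 1} τ · 𝕋_ε(τ; Φ)`. -/
noncomputable def tailSup {H : Type*} [NormedAddCommGroup H]
    (μ : ℝ → ℝ) (ε : ℝ) (Φ : ℝ → H) : ℝ≥0∞ :=
  ⨆ (τ : ℝ) (_ : 1 ≤ τ), ENNReal.ofReal τ * tailFn μ ε Φ τ

/-- The integrated past history generated by a trajectory `U` and a past-history
datum `Φ₀`: `Φ^t(s) = ∫₀ˢ U(t-y) dy` for `0 < s ≤ t` and
`Φ^t(s) = Φ₀(s-t) + ∫₀ᵗ U(t-y) dy` for `s > t`. -/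
noncomputable def pastHistory {H : Type*} [NormedAddCommGroup H] [NormedSpace ℝ H]
    (U : ℝ → H) (Φ₀ : ℝ → H) (t s : ℝ) : H :=
  if s ≤ t then ∫ y in (0:ℝ)..s, U (t - y)
  else Φ₀ (s - t) + ∫ y in (0:ℝ)..t, U (t - y)

/-!
The history `Φ^t` splits into the datum `Φ₀` translated to the right by `t` and an integral of `U`
whose norm at `s` is at most `ρ * s`.

* Translation moves the tail region of level `τ` into the one of level `max 1 (τ - t)`, and
  `τ ≤ (t + 1) * max 1 (τ - t)`; the exponential decay of `μ` supplies the factor `exp (-δ t)`.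
* On the tail region `τ * s ^ 2 ≤ s + s ^ 3`, so after the substitution `s = ε * x` the second part
  costs at most `ρ ^ 2` times the moment `∫ (x + x ^ 3) * μ x`, uniformly in `ε ≤ 1`. This moment is
  finite because `μ` decays exponentially.
-/

section ExponentialDecay

variable {δ : ℝ} {μ : ℝ → ℝ}

/-- Exponential decay of a memory kernel on `(0, ∞)` at rate `δ`: the integrated form of the
differential inequality `μ' + δ μ ≤ 0`, which makes sense for kernels that are not
differentiable. -/
def HasExpDecay (δ : ℝ) (μ : ℝ → ℝ) : Prop :=
  ∀ ⦃s t : ℝ⦄, 0 < s → 0 ≤ t → μ (s + t) ≤ Real.exp (-δ * t) * μ s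

lemma hasExpDecay_of_deriv_add_mul_nonpos (hμ : DifferentiableOn ℝ μ (Ioi 0))
    (hderiv : ∀ s, 0 < s → deriv μ s + δ * μ s ≤ 0) : HasExpDecay δ μ := by
  have hasDeriv : ∀ x ∈ Ioi (0:ℝ), HasDerivAt (fun x => Real.exp (δ * x) * μ x)
      (Real.exp (δ * x) * (δ * 1) * μ x + Real.exp (δ * x) * deriv μ x) x := fun x hx =>
    ((hasDerivAt_id x).const_mul δ).exp.mul (hμ.differentiableAt (Ioi_mem_nhds hx)).hasDerivAt
  have antitone : AntitoneOn (fun x => Real.exp (δ * x) * μ x) (Ioi 0) := by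
    refine antitoneOn_of_hasDerivWithinAt_nonpos (convex_Ioi 0)
      (fun x hx => (hasDeriv x hx).continuousAt.continuousWithinAt)
      (fun x hx => (hasDeriv x (interior_subset hx)).hasDerivWithinAt) fun x hx => ?_
    calc Real.exp (δ * x) * (δ * 1) * μ x + Real.exp (δ * x) * deriv μ x
        = Real.exp (δ * x) * (deriv μ x + δ * μ x) := by ring
      _ ≤ 0 := mul_nonpos_of_nonneg_of_nonpos (Real.exp_pos _).le (hderiv x (interior_subset hx))
  intro s t hs ht
  calc μ (s + t) = Real.exp (-δ * (s + t)) * (Real.exp (δ * (s + t)) * μ (s + t)) := by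
        rw [← mul_assoc, ← Real.exp_add]; simp
    _ ≤ Real.exp (-δ * (s + t)) * (Real.exp (δ * s) * μ s) := by
        gcongr ?_ * ?_
        exact antitone hs (add_pos_of_pos_of_nonneg hs ht) (le_add_of_nonneg_right ht)
    _ = Real.exp (-δ * t) * μ s := by
        rw [← mul_assoc, ← Real.exp_add]; ring_nf

namespace HasExpDecay

lemma antitoneOn (hdecay : HasExpDecay δ μ) (hδ : 0 ≤ δ) (hμ : ∀ s, 0 < s → 0 ≤ μ s) :
    AntitoneOn μ (Ioi 0) := by
  intro s hs r _ hsr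
  have ht : 0 ≤ r - s := sub_nonneg.2 hsr
  calc μ r = μ (s + (r - s)) := by rw [add_sub_cancel]
    _ ≤ Real.exp (-δ * (r - s)) * μ s := hdecay hs ht
    _ ≤ 1 * μ s := by
        gcongr
        · exact hμ s hs
        · exact Real.exp_le_one_iff.2 (mul_nonpos_of_nonpos_of_nonneg (neg_nonpos.2 hδ) ht)
    _ = μ s := one_mul _

lemma integrableOn_pow_mul_Ioi_one (hdecay : HasExpDecay δ μ) (hδ : 0 < δ)
    (hμ : ∀ s, 0 < s → 0 ≤ μ s) (n : ℕ) : IntegrableOn (fun s => s ^ n * μ s) (Ioi 1) := by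
  have hpos : ∀ᵐ s ∂volume.restrict (Ioi (1:ℝ)), s ∈ Ioi (1:ℝ) :=
    ae_restrict_mem measurableSet_Ioi
  have hsub : Ioi (1:ℝ) ⊆ Ioi 0 := Ioi_subset_Ioi zero_le_one
  have hgamma : IntegrableOn (fun s : ℝ => s ^ n * Real.exp (-δ * s)) (Ioi 1) := by
    simpa only [Real.rpow_natCast, Real.rpow_one] using
      (integrableOn_rpow_mul_exp_neg_mul_rpow (s := n) (by linarith [n.cast_nonneg (α := ℝ)])
        one_pos hδ).mono_set hsub
  refine (hgamma.const_mul (Real.exp δ * μ 1)).mono' ?_ ?_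
  · exact ((measurable_id.pow_const n).aemeasurable.mul (aemeasurable_restrict_of_antitoneOn
      measurableSet_Ioi ((hdecay.antitoneOn hδ.le hμ).mono hsub))).aestronglyMeasurable
  · filter_upwards [hpos] with s (hs : 1 < s)
    have hs₀ : 0 < s := one_pos.trans hs
    have hμs := hμ s hs₀
    rw [Real.norm_of_nonneg (by positivity)]
    calc s ^ n * μ s = s ^ n * μ (1 + (s - 1)) := by rw [add_sub_cancel]
      _ ≤ s ^ n * (Real.exp (-δ * (s - 1)) * μ 1) := by
          gcongr
          exact hdecay one_pos (sub_nonneg.2 hs.le)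
      _ = Real.exp δ * μ 1 * (s ^ n * Real.exp (-δ * s)) := by
          rw [show -δ * (s - 1) = δ + -δ * s by ring, Real.exp_add]; ring

lemma integrableOn_pow_mul (hdecay : HasExpDecay δ μ) (hδ : 0 < δ) (hμ : ∀ s, 0 < s → 0 ≤ μ s)
    {m n : ℕ} (hmn : m ≤ n) (hint : IntegrableOn (fun s => s ^ m * μ s) (Ioi 0)) :
    IntegrableOn (fun s => s ^ n * μ s) (Ioi 0) := by
  have near_zero : IntegrableOn (fun s => s ^ n * μ s) (Ioc 0 1) := by
    refine (hint.mono_set Ioc_subset_Ioi_self).mono' ?_ ?_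
    · exact ((measurable_id.pow_const n).aemeasurable.mul (aemeasurable_restrict_of_antitoneOn
        measurableSet_Ioc
        ((hdecay.antitoneOn hδ.le hμ).mono Ioc_subset_Ioi_self))).aestronglyMeasurable
    · filter_upwards [ae_restrict_mem measurableSet_Ioc] with s ⟨hs₀, hs₁⟩
      have hμs := hμ s hs₀
      rw [Real.norm_of_nonneg (by positivity)]
      exact mul_le_mul_of_nonneg_right (pow_le_pow_of_le_one hs₀.le hs₁ hmn) hμs
  rw [← Ioc_union_Ioi_eq_Ioi zero_le_one]
  exact near_zero.union (hdecay.integrableOn_pow_mul_Ioi_one hδ hμ n)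

end HasExpDecay

end ExponentialDecay

section TailSet

variable {s t τ : ℝ}

/-- The region of integration of the tail function at level `τ`. -/
def tailSet (τ : ℝ) : Set ℝ := Ioo 0 (1 / τ) ∪ Ioi τ

lemma measurableSet_tailSet (τ : ℝ) : MeasurableSet (tailSet τ) :=
  measurableSet_Ioo.union measurableSet_Ioi

lemma tailSet_subset_Ioi (hτ : 0 ≤ τ) : tailSet τ ⊆ Ioi 0 :=
  union_subset Ioo_subset_Ioi_self (Ioi_subset_Ioi hτ)

lemma mul_sq_le_of_mem_tailSet (hτ : 0 < τ) (hs : s ∈ tailSet τ) : τ * s ^ 2 ≤ s + s ^ 3 := by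
  have hs₀ : 0 < s := tailSet_subset_Ioi hτ.le hs
  rcases hs with ⟨-, hs⟩ | hs
  · have hτs : τ * s ≤ 1 := by rw [mul_comm]; exact ((lt_div_iff₀ hτ).1 hs).le
    calc τ * s ^ 2 = τ * s * s := by ring
      _ ≤ 1 * s := by gcongr
      _ ≤ s + s ^ 3 := by rw [one_mul]; exact le_add_of_nonneg_right (by positivity)
  · calc τ * s ^ 2 ≤ s * s ^ 2 := by gcongr; exact (mem_Ioi.1 hs).le
      _ ≤ s + s ^ 3 := by rw [← pow_succ']; exact le_add_of_nonneg_left hs₀.le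

lemma sub_mem_tailSet (ht : 0 ≤ t) (hτ : 1 ≤ τ) (hs : s ∈ tailSet τ) (hts : t < s)
    (hne : s ≠ max 1 (τ - t) + t) : s - t ∈ tailSet (max 1 (τ - t)) := by
  rcases hs with ⟨-, hs⟩ | hs
  · have hle : max 1 (τ - t) ≤ τ := max_le hτ (sub_le_self τ ht)
    have : 1 / τ ≤ 1 / max 1 (τ - t) := by gcongr
    exact Or.inl ⟨sub_pos.2 hts, by linarith⟩
  · rcases lt_or_gt_of_ne hne with hlt | hgt
    · have hmax : max 1 (τ - t) = 1 := max_eq_left <| by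
        by_contra! h
        rw [max_eq_right h.le, sub_add_cancel] at hlt
        exact hlt.not_gt hs
      rw [hmax] at hlt ⊢
      exact Or.inl ⟨sub_pos.2 hts, by linarith⟩
    · exact Or.inr (lt_sub_iff_add_lt.2 hgt)

end TailSet

section TailFunction

variable {E F G : Type*} [NormedAddCommGroup E] [NormedAddCommGroup F] [NormedAddCommGroup G]
  {δ ε t τ : ℝ} {μ : ℝ → ℝ}

lemma tailFn_eq (μ : ℝ → ℝ) (ε : ℝ) (Φ : ℝ → E) (τ : ℝ) :
    tailFn μ ε Φ τ = ∫⁻ s in tailSet τ, ENNReal.ofReal (ε⁻¹ * μ (s / ε) * ‖Φ s‖ ^ 2) := by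
  have hε : ε * (ε ^ 2)⁻¹ = ε⁻¹ := by
    rcases eq_or_ne ε 0 with rfl | hε
    · simp
    · field_simp
  simp only [tailFn, tailSet, ← mul_assoc, hε]

lemma mul_tailFn_le_tailSup (μ : ℝ → ℝ) (ε : ℝ) (Φ : ℝ → E) (hτ : 1 ≤ τ) :
    ENNReal.ofReal τ * tailFn μ ε Φ τ ≤ tailSup μ ε Φ :=
  le_iSup₂ (f := fun τ (_ : 1 ≤ τ) => ENNReal.ofReal τ * tailFn μ ε Φ τ) τ hτ

lemma tailFn_const_smul [NormedSpace ℝ E] (μ : ℝ → ℝ) (ε c : ℝ) (Φ : ℝ → E) (τ : ℝ) :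
    tailFn μ ε (c • Φ) τ = ENNReal.ofReal (c ^ 2) * tailFn μ ε Φ τ := by
  rw [tailFn_eq, tailFn_eq, ← lintegral_const_mul' _ _ ofReal_ne_top]
  congr with s
  rw [← ENNReal.ofReal_mul (sq_nonneg c), Pi.smul_apply, norm_smul, mul_pow, Real.norm_eq_abs,
    sq_abs, mul_left_comm]

lemma tailSup_const_smul [NormedSpace ℝ E] (μ : ℝ → ℝ) (ε c : ℝ) (Φ : ℝ → E) :
    tailSup μ ε (c • Φ) = ENNReal.ofReal (c ^ 2) * tailSup μ ε Φ := by
  simp only [tailSup, tailFn_const_smul, ENNReal.mul_iSup, mul_left_comm]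

lemma tailFn_le_two_mul_add (hε : 0 < ε) (hτ : 0 ≤ τ) (hμ : ∀ s, 0 < s → 0 ≤ μ s)
    (hanti : AntitoneOn μ (Ioi 0)) {Φ : ℝ → E} (Φ₁ : ℝ → F) {Φ₂ : ℝ → G}
    (hΦ₂ : AEStronglyMeasurable Φ₂) (hΦ : ∀ s, 0 < s → ‖Φ s‖ ≤ ‖Φ₁ s‖ + ‖Φ₂ s‖) :
    tailFn μ ε Φ τ ≤ 2 * (tailFn μ ε Φ₁ τ + tailFn μ ε Φ₂ τ) := by
  have hanti_div : AntitoneOn (fun s => μ (s / ε)) (tailSet τ) := fun a ha b hb hab =>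
    hanti (div_pos (tailSet_subset_Ioi hτ ha) hε) (div_pos (tailSet_subset_Ioi hτ hb) hε)
      (by gcongr)
  have hmeas : AEMeasurable (fun s => ENNReal.ofReal (ε⁻¹ * μ (s / ε) * ‖Φ₂ s‖ ^ 2))
      (volume.restrict (tailSet τ)) :=
    (((aemeasurable_restrict_of_antitoneOn (measurableSet_tailSet τ) hanti_div).const_mul _).mul
      (hΦ₂.norm.aemeasurable.restrict.pow_const 2)).ennreal_ofReal
  rw [tailFn_eq, tailFn_eq, tailFn_eq, ← lintegral_add_right' _ hmeas,
    ← lintegral_const_mul' _ _ ofNat_ne_top]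
  refine setLIntegral_mono' (measurableSet_tailSet τ) fun s hs => ?_
  have hs₀ : 0 < s := tailSet_subset_Ioi hτ hs
  have hμs := hμ (s / ε) (by positivity)
  rw [← ENNReal.ofReal_add (by positivity) (by positivity), ← ENNReal.ofReal_ofNat 2,
    ← ENNReal.ofReal_mul zero_le_two]
  refine ENNReal.ofReal_le_ofReal ?_
  calc ε⁻¹ * μ (s / ε) * ‖Φ s‖ ^ 2
      ≤ ε⁻¹ * μ (s / ε) * (‖Φ₁ s‖ + ‖Φ₂ s‖) ^ 2 := by gcongr; exact hΦ s hs₀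
    _ ≤ ε⁻¹ * μ (s / ε) * (2 * (‖Φ₁ s‖ ^ 2 + ‖Φ₂ s‖ ^ 2)) := by gcongr; exact add_sq_le
    _ = 2 * (ε⁻¹ * μ (s / ε) * ‖Φ₁ s‖ ^ 2 + ε⁻¹ * μ (s / ε) * ‖Φ₂ s‖ ^ 2) := by ring

lemma tailSup_le_two_mul_add (hε : 0 < ε) (hμ : ∀ s, 0 < s → 0 ≤ μ s)
    (hanti : AntitoneOn μ (Ioi 0)) {Φ : ℝ → E} (Φ₁ : ℝ → F) {Φ₂ : ℝ → G}
    (hΦ₂ : AEStronglyMeasurable Φ₂) (hΦ : ∀ s, 0 < s → ‖Φ s‖ ≤ ‖Φ₁ s‖ + ‖Φ₂ s‖) :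
    tailSup μ ε Φ ≤ 2 * (tailSup μ ε Φ₁ + tailSup μ ε Φ₂) := by
  refine iSup₂_le fun τ hτ => ?_
  calc ENNReal.ofReal τ * tailFn μ ε Φ τ
      ≤ ENNReal.ofReal τ * (2 * (tailFn μ ε Φ₁ τ + tailFn μ ε Φ₂ τ)) := by
        gcongr
        exact tailFn_le_two_mul_add hε (zero_le_one.trans hτ) hμ hanti Φ₁ hΦ₂ hΦ
    _ = 2 * (ENNReal.ofReal τ * tailFn μ ε Φ₁ τ + ENNReal.ofReal τ * tailFn μ ε Φ₂ τ) := by ring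
    _ ≤ 2 * (tailSup μ ε Φ₁ + tailSup μ ε Φ₂) := by
        gcongr <;> exact mul_tailFn_le_tailSup μ ε _ hτ

/-- The right translation semigroup on histories: `Φ` is delayed by `t` and extended by zero to
`(-∞, t]`. -/
noncomputable def rightTranslate (t : ℝ) (Φ : ℝ → E) : ℝ → E :=
  (Ioi t).indicator fun s => Φ (s - t)

lemma tailFn_rightTranslate_le (hε : 0 < ε) (hdecay : HasExpDecay δ μ) (Φ : ℝ → E) (ht : 0 ≤ t)
    (hτ : 1 ≤ τ) :
    tailFn μ ε (rightTranslate t Φ) τ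
      ≤ ENNReal.ofReal (Real.exp (-δ * (t / ε))) * tailFn μ ε Φ (max 1 (τ - t)) := by
  rw [tailFn_eq, tailFn_eq, ← lintegral_indicator (measurableSet_tailSet _),
    ← lintegral_indicator (measurableSet_tailSet _), ← lintegral_const_mul' _ _ ofReal_ne_top]
  refine (lintegral_mono_ae ?_).trans_eq (lintegral_sub_right_eq_self _ t)
  -- The excluded point is sent to the endpoint `max 1 (τ - t)`, which the tail region omits.
  filter_upwards [Measure.ae_ne volume (max 1 (τ - t) + t)] with s hne
  refine indicator_apply_le' (fun hs => ?_) fun _ => zero_le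
  rcases le_or_gt s t with hst | hts
  · simp [rightTranslate, hst]
  rw [indicator_of_mem (sub_mem_tailSet ht hτ hs hts hne), ← ENNReal.ofReal_mul (by positivity),
    rightTranslate, indicator_of_mem (mem_Ioi.2 hts)]
  refine ENNReal.ofReal_le_ofReal ?_
  have hμ_le : μ (s / ε) ≤ Real.exp (-δ * (t / ε)) * μ ((s - t) / ε) := by
    rw [← sub_add_cancel s t, add_div, sub_add_cancel]
    exact hdecay (div_pos (sub_pos.2 hts) hε) (by positivity)
  calc ε⁻¹ * μ (s / ε) * ‖Φ (s - t)‖ ^ 2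
      ≤ ε⁻¹ * (Real.exp (-δ * (t / ε)) * μ ((s - t) / ε)) * ‖Φ (s - t)‖ ^ 2 := by gcongr
    _ = Real.exp (-δ * (t / ε)) * (ε⁻¹ * μ ((s - t) / ε) * ‖Φ (s - t)‖ ^ 2) := by ring

lemma tailSup_rightTranslate_le (hε : 0 < ε) (hdecay : HasExpDecay δ μ) (Φ : ℝ → E)
    (ht : 0 ≤ t) :
    tailSup μ ε (rightTranslate t Φ)
      ≤ ENNReal.ofReal ((t + 1) * Real.exp (-δ * (t / ε))) * tailSup μ ε Φ := by
  refine iSup₂_le fun τ hτ => ?_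
  set τ' := max 1 (τ - t)
  have hτ'₁ : 1 ≤ τ' := le_max_left _ _
  have hττ' : τ ≤ (t + 1) * τ' :=
    calc τ ≤ t * 1 + τ' := by linarith [le_max_right 1 (τ - t)]
      _ ≤ t * τ' + τ' := by gcongr
      _ = (t + 1) * τ' := by ring
  calc ENNReal.ofReal τ * tailFn μ ε (rightTranslate t Φ) τ
      ≤ ENNReal.ofReal ((t + 1) * τ')
          * (ENNReal.ofReal (Real.exp (-δ * (t / ε))) * tailFn μ ε Φ τ') := by
        gcongr
        exact tailFn_rightTranslate_le hε hdecay Φ ht hτ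
    _ = ENNReal.ofReal ((t + 1) * Real.exp (-δ * (t / ε)))
          * (ENNReal.ofReal τ' * tailFn μ ε Φ τ') := by
        rw [ENNReal.ofReal_mul (by positivity), ENNReal.ofReal_mul (by positivity)]; ring
    _ ≤ ENNReal.ofReal ((t + 1) * Real.exp (-δ * (t / ε))) * tailSup μ ε Φ := by
        gcongr
        exact mul_tailFn_le_tailSup μ ε Φ hτ'₁

lemma tailSup_id_le (hε : ε ∈ Ioc 0 1) (hμ : ∀ s, 0 < s → 0 ≤ μ s)
    (hint : IntegrableOn (fun s => (s + s ^ 3) * μ s) (Ioi 0)) :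
    tailSup μ ε (id : ℝ → ℝ) ≤ ENNReal.ofReal (∫ s in Ioi 0, (s + s ^ 3) * μ s) := by
  obtain ⟨hε₀, hε₁⟩ := hε
  set g : ℝ → ℝ := fun s => (s + s ^ 3) * μ s
  have hg : ∀ s, 0 < s → 0 ≤ g s := fun s hs => mul_nonneg (by positivity) (hμ s hs)
  have hint_scaled : IntegrableOn (fun s => ε⁻¹ * g (ε⁻¹ * s)) (Ioi 0) := by
    refine Integrable.const_mul ((integrableOn_Ioi_comp_mul_left_iff g 0 (inv_pos.2 hε₀)).2 ?_) _
    rwa [mul_zero]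
  have pointwise : ∀ τ, 0 < τ → ∀ s ∈ tailSet τ,
      τ * (ε⁻¹ * μ (s / ε) * ‖id s‖ ^ 2) ≤ ε⁻¹ * g (ε⁻¹ * s) := fun τ hτ s hs => by
    have hs₀ : 0 < s := tailSet_subset_Ioi hτ.le hs
    have hμs := hμ (ε⁻¹ * s) (by positivity)
    have hs_le : s ≤ ε⁻¹ * s := le_mul_of_one_le_left hs₀.le ((one_le_inv₀ hε₀).2 hε₁)
    calc τ * (ε⁻¹ * μ (s / ε) * ‖id s‖ ^ 2) = ε⁻¹ * (τ * s ^ 2 * μ (ε⁻¹ * s)) := by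
          rw [id, Real.norm_eq_abs, sq_abs, div_eq_inv_mul]; ring
      _ ≤ ε⁻¹ * ((s + s ^ 3) * μ (ε⁻¹ * s)) := by
          gcongr; exact mul_sq_le_of_mem_tailSet hτ hs
      _ ≤ ε⁻¹ * g (ε⁻¹ * s) := by simp only [g]; gcongr
  refine iSup₂_le fun τ hτ => ?_
  have hτ₀ : 0 < τ := one_pos.trans_le hτ
  calc ENNReal.ofReal τ * tailFn μ ε id τ
      = ∫⁻ s in tailSet τ, ENNReal.ofReal (τ * (ε⁻¹ * μ (s / ε) * ‖id s‖ ^ 2)) := by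
        simp only [tailFn_eq, ENNReal.ofReal_mul hτ₀.le, lintegral_const_mul' _ _ ofReal_ne_top]
    _ ≤ ∫⁻ s in tailSet τ, ENNReal.ofReal (ε⁻¹ * g (ε⁻¹ * s)) :=
        setLIntegral_mono' (measurableSet_tailSet τ) fun s hs =>
          ENNReal.ofReal_le_ofReal (pointwise τ hτ₀ s hs)
    _ ≤ ∫⁻ s in Ioi 0, ENNReal.ofReal (ε⁻¹ * g (ε⁻¹ * s)) :=
        lintegral_mono_set (tailSet_subset_Ioi hτ₀.le)
    _ = ENNReal.ofReal (∫ s in Ioi 0, ε⁻¹ * g (ε⁻¹ * s)) := by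
        refine (ofReal_integral_eq_lintegral_ofReal hint_scaled ?_).symm
        filter_upwards [ae_restrict_mem measurableSet_Ioi] with s (hs : 0 < s)
        exact mul_nonneg (by positivity) (hg _ (by positivity))
    _ = ENNReal.ofReal (∫ s in Ioi 0, g s) := by
        rw [integral_const_mul, integral_comp_mul_left_Ioi g 0 (inv_pos.2 hε₀), mul_zero, inv_inv,
          smul_eq_mul, inv_mul_cancel_left₀ hε₀.ne']

end TailFunction

section PastHistory

variable {E : Type*} [NormedAddCommGroup E] [NormedSpace ℝ E] {δ ε ρ t s : ℝ} {μ : ℝ → ℝ}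
  {U : ℝ → E}

lemma pastHistory_eq_rightTranslate_add (U Φ₀ : ℝ → E) (t s : ℝ) :
    pastHistory U Φ₀ t s = rightTranslate t Φ₀ s + ∫ y in (0:ℝ)..min s t, U (t - y) := by
  rcases le_or_gt s t with hst | hts
  · simp [pastHistory, rightTranslate, hst]
  · simp [pastHistory, rightTranslate, hts, hts.not_ge, hts.le]

lemma norm_pastHistory_le (hU : ∀ t, 0 ≤ t → ‖U t‖ ≤ ρ) (Φ₀ : ℝ → E) (ht : 0 ≤ t) (hs : 0 ≤ s) :
    ‖pastHistory U Φ₀ t s‖ ≤ ‖rightTranslate t Φ₀ s‖ + ‖ρ * s‖ := by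
  have hρ : 0 ≤ ρ := (norm_nonneg _).trans (hU 0 le_rfl)
  have hmin : 0 ≤ min s t := le_min hs ht
  have integral_le : ‖∫ y in (0:ℝ)..min s t, U (t - y)‖ ≤ ρ * s :=
    calc ‖∫ y in (0:ℝ)..min s t, U (t - y)‖ ≤ ρ * |min s t - 0| := by
          refine intervalIntegral.norm_integral_le_of_norm_le_const fun y hy => hU _ ?_
          rw [uIoc_of_le hmin] at hy
          exact sub_nonneg.2 (hy.2.trans (min_le_right s t))
      _ ≤ ρ * s := by
          rw [sub_zero, abs_of_nonneg hmin]
          gcongr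
          exact min_le_left s t
  rw [pastHistory_eq_rightTranslate_add, Real.norm_of_nonneg (mul_nonneg hρ hs)]
  exact (norm_add_le _ _).trans (by gcongr)

lemma tailSup_pastHistory_le (hδ : 0 ≤ δ) (hμ : ∀ s, 0 < s → 0 ≤ μ s) (hdecay : HasExpDecay δ μ)
    (hint : IntegrableOn (fun s => (s + s ^ 3) * μ s) (Ioi 0)) (hε : ε ∈ Ioc 0 1)
    (hU : ∀ t, 0 ≤ t → ‖U t‖ ≤ ρ) (Φ₀ : ℝ → E) (ht : 0 ≤ t) :
    tailSup μ ε (pastHistory U Φ₀ t)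
      ≤ ENNReal.ofReal (2 * (t + 1) * Real.exp (-δ * t)) * tailSup μ ε Φ₀
        + ENNReal.ofReal ((2 * ∫ s in Ioi 0, (s + s ^ 3) * μ s) * ρ ^ 2) := by
  have ht_le : t ≤ t / ε := le_div_self ht hε.1 hε.2
  calc tailSup μ ε (pastHistory U Φ₀ t)
      ≤ 2 * (tailSup μ ε (rightTranslate t Φ₀) + tailSup μ ε (ρ • (id : ℝ → ℝ))) :=
        tailSup_le_two_mul_add hε.1 hμ (hdecay.antitoneOn hδ hμ) _
          (aestronglyMeasurable_id.const_smul ρ)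
          fun s hs => norm_pastHistory_le hU Φ₀ ht hs.le
    _ ≤ 2 * (ENNReal.ofReal ((t + 1) * Real.exp (-δ * (t / ε))) * tailSup μ ε Φ₀
          + ENNReal.ofReal (ρ ^ 2) * ENNReal.ofReal (∫ s in Ioi 0, (s + s ^ 3) * μ s)) := by
        rw [tailSup_const_smul]
        gcongr
        · exact tailSup_rightTranslate_le hε.1 hdecay Φ₀ ht
        · exact tailSup_id_le hε hμ hint
    _ ≤ 2 * (ENNReal.ofReal ((t + 1) * Real.exp (-δ * t)) * tailSup μ ε Φ₀
          + ENNReal.ofReal (ρ ^ 2) * ENNReal.ofReal (∫ s in Ioi 0, (s + s ^ 3) * μ s)) := by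
        have hexp : -δ * (t / ε) ≤ -δ * t := mul_le_mul_of_nonpos_left ht_le (neg_nonpos.2 hδ)
        gcongr
    _ = ENNReal.ofReal (2 * (t + 1) * Real.exp (-δ * t)) * tailSup μ ε Φ₀
          + ENNReal.ofReal ((2 * ∫ s in Ioi 0, (s + s ^ 3) * μ s) * ρ ^ 2) := by
        rw [mul_add, ← ENNReal.ofReal_mul (sq_nonneg ρ), ← mul_assoc, ← ENNReal.ofReal_ofNat 2,
          ← ENNReal.ofReal_mul zero_le_two, ← ENNReal.ofReal_mul zero_le_two]
        ring_nf

end PastHistory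

theorem tail_function_decay_general {δ : ℝ} (hδ : 0 < δ) {μ : ℝ → ℝ}
    (hμ : ∀ s, 0 < s → 0 ≤ μ s) (hdecay : HasExpDecay δ μ)
    (hint : IntegrableOn (fun s => s * μ s) (Ioi 0)) :
    ∃ C : ℝ, 0 < C ∧
      ∀ (E : Type*) [NormedAddCommGroup E] [NormedSpace ℝ E] [CompleteSpace E],
      ∀ ε ∈ Ioc (0:ℝ) 1, ∀ (ρ : ℝ) (U : ℝ → E), (∀ t, 0 ≤ t → ‖U t‖ ≤ ρ) →
      ∀ (Φ₀ : ℝ → E) (t : ℝ), 0 ≤ t →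
        tailSup μ ε (pastHistory U Φ₀ t)
          ≤ ENNReal.ofReal (2 * (t + 1) * Real.exp (-δ * t)) * tailSup μ ε Φ₀
            + ENNReal.ofReal (C * ρ ^ 2) := by
  have hmoment : IntegrableOn (fun s => (s + s ^ 3) * μ s) (Ioi 0) := by
    simp only [add_mul]
    exact hint.add
      (hdecay.integrableOn_pow_mul hδ hμ (m := 1) (n := 3) (by norm_num) (by simpa using hint))
  have hM : 0 ≤ ∫ s in Ioi 0, (s + s ^ 3) * μ s :=
    setIntegral_nonneg measurableSet_Ioi fun s (hs : 0 < s) => mul_nonneg (by positivity) (hμ s hs)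
  refine ⟨(2 * ∫ s in Ioi 0, (s + s ^ 3) * μ s) + 1, by positivity, ?_⟩
  intro E _ _ _ ε hε ρ U hU Φ₀ t ht
  refine (tailSup_pastHistory_le hδ.le hμ hdecay hmoment hε hU Φ₀ ht).trans ?_
  gcongr
  exact le_add_of_nonneg_right zero_le_one

/-- **Decay of the tail of the integrated past history.**
With memory kernel `μ` (nonnegative, nonincreasing, `C¹`, integrable on `(0,∞)`,
`μ' + δμ ≤ 0`), there is a constant `C > 0` depending only on `μ` and `δ`
(independent of `ε`, `t`, `ρ`, `U`, `Φ₀` and the Hilbert space `H`) such that for any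
trajectory `U` bounded by `ρ` and any datum `Φ₀` with finite tail supremum, the
integrated past history `Φ^t` satisfies
`sup_{τ≥1} τ 𝕋_ε(τ; Φ^t) ≤ 2(t+2) e^{-δt} sup_{τ≥1} τ 𝕋_ε(τ; Φ₀) + C ρ²`. -/
theorem tail_function_decay
    (δ : ℝ) (hδ : 0 < δ)
    (μ : ℝ → ℝ)
    (hμnonneg : ∀ s : ℝ, 0 < s → 0 ≤ μ s)
    (hμanti : ∀ s t : ℝ, 0 < s → s ≤ t → μ t ≤ μ s)
    (hμC1 : ContDiffOn ℝ 1 μ (Ioi 0))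
    (hμint : IntegrableOn μ (Ioi 0))
    (hμdecay : ∀ s : ℝ, 0 < s → deriv μ s + δ * μ s ≤ 0) :
    ∃ C : ℝ, 0 < C ∧
      ∀ (H : Type) [inst1 : NormedAddCommGroup H] [inst2 : InnerProductSpace ℝ H]
        [inst3 : CompleteSpace H] [inst4 : MeasurableSpace H] [inst5 : BorelSpace H],
      ∀ ε : ℝ, ε ∈ Ioc (0:ℝ) 1 →
      ∀ ρ : ℝ, 0 < ρ →
      ∀ U : ℝ → H, (∀ t : ℝ, 0 ≤ t → ‖U t‖ ≤ ρ) →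
      ∀ Φ₀ : ℝ → H, Measurable Φ₀ → tailSup μ ε Φ₀ < ⊤ →
      ∀ t : ℝ, 0 ≤ t →
        tailSup μ ε (pastHistory U Φ₀ t)
          ≤ ENNReal.ofReal (2 * (t + 2) * Real.exp (-δ * t)) * tailSup μ ε Φ₀
              + ENNReal.ofReal (C * ρ^2) := by
  have hdecay : HasExpDecay δ μ :=
    hasExpDecay_of_deriv_add_mul_nonpos (hμC1.differentiableOn one_ne_zero) hμdecay
  have hmoment : IntegrableOn (fun s => s * μ s) (Ioi 0) := by
    simpa using hdecay.integrableOn_pow_mul hδ hμnonneg (m := 0) (n := 1) zero_le_one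
      (by simpa using hμint)
  obtain ⟨C, hC, bound⟩ := tail_function_decay_general hδ hμnonneg hdecay hmoment
  exact ⟨C, hC, fun H _ _ _ _ _ ε hε ρ _ U hU Φ₀ _ _ t ht =>
    (bound H ε hε ρ U hU Φ₀ t ht).trans (by gcongr; norm_num)⟩
end
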